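/- There exists a widely digitally delicate prime in base 9; that is, there exists a prime p such that for every natural number i and every digit d ∈ {0, 1, ..., 8} with d ≠ digit_i(p), where digit_i(p) denotes the i-th base-9 digit of p (counting from the least significant digit, i = 0, with digit_i(p) = 0 for all i at or beyond the number of base-9 digits of p, i.e., leading zeros), the number p + (d − digit_i(p))·9^i obtained by replacing the i-th base-9 digit of p (including leading zeros) with d is not prime. -/

import Mathlib

/-- The i-th base-9 digit (from the least significant, starting at i = 0) of n;
for i at or beyond the number of base-9 digits of n this is 0 (a leading zero). -/
def digit (n i : ℕ) : ℕ := n / 9 ^ i % 9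

namespace WDD

/-- The prime. -/
def P : ℕ := 11109534572660123667978518780667651553742673848058480690538819116643341384593506872694849197850145810909408053119211081677355943419401992401859411669584666648954111714758342789885610096282607627969369210881

/-- Product of the covering primes. -/
def Q : ℕ := 2583771629135340495389862572642918659517978205718312512624143282923688603028314706977308420096135090

/-- `acc * b ^ e mod m`, by binary powering with fuel. -/
def pm : ℕ → ℕ → ℕ → ℕ → ℕ → ℕ
  | 0, _, _, _, acc => acc
  | f + 1, m, b, e, acc =>
    Nat.rec acc (fun _ _ => pm f m (b * b % m) (e / 2)
      (Nat.rec acc (fun _ _ => acc * b % m) (e % 2))) e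

theorem pm_spec (f m : ℕ) : ∀ b e acc, e < 2 ^ f → pm f m b e acc ≡ acc * b ^ e [MOD m] := by
  induction f with
  | zero =>
    intro b e acc h
    have : e = 0 := by simpa using h
    subst this
    simp [pm, Nat.ModEq.refl]
  | succ f ih =>
    intro b e acc h
    rcases Nat.eq_zero_or_pos e with h0 | h0
    · subst h0
      simp [pm, Nat.ModEq.refl]
    · have hs : pm (f + 1) m b e acc = pm f m (b * b % m) (e / 2)
          (Nat.rec acc (fun _ _ => acc * b % m) (e % 2)) := by
        obtain ⟨k, rfl⟩ : ∃ k, e = k + 1 := ⟨e - 1, by omega⟩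
        rfl
      rw [hs]
      have hlt : e / 2 < 2 ^ f := by rw [pow_succ] at h; omega
      refine (ih _ _ _ hlt).trans ?_
      have hb : (b * b % m) ^ (e / 2) ≡ (b * b) ^ (e / 2) [MOD m] := (Nat.mod_modEq _ _).pow _
      have he := Nat.div_add_mod e 2
      rcases Nat.mod_two_eq_zero_or_one e with h2 | h2
      · rw [h2] at he ⊢
        refine (hb.mul_left acc).trans ?_
        have : (b * b) ^ (e / 2) = b ^ e := by
          rw [← pow_two, ← pow_mul]; congr 1
        rw [this]
      · rw [h2] at he ⊢
        refine ((Nat.mod_modEq (acc * b) m).mul hb).trans ?_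
        have : acc * b * (b * b) ^ (e / 2) = acc * b ^ e := by
          conv_rhs => rw [← he]
          rw [← pow_two, ← pow_mul, pow_succ]; ring
        rw [this]

theorem proth (p A e f : ℕ) (hp2 : p % 2 = 1) (hp1 : 1 < p) (h1 : pm f p 7 (A * 2 ^ e) 1 = p - 1)
    (h2 : A * 2 ^ e < 2 ^ f) (h4 : p < 2 ^ (e + 1) * 2 ^ (e + 1)) : Nat.Prime p := by
  have hf := Nat.minFac_prime (n := p) (by omega)
  set q := p.minFac with hq
  have hd : q ∣ p := Nat.minFac_dvd p
  have : Fact q.Prime := ⟨hf⟩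
  have hq2 : q ≠ 2 := by
    intro h
    rw [h] at hd
    omega
  have hm := pm_spec f p 7 (A * 2 ^ e) 1 h2
  rw [h1, one_mul] at hm
  have hz : ((7 : ZMod q) ^ A) ^ 2 ^ e = -1 := by
    rw [← pow_mul]
    have := (ZMod.natCast_eq_natCast_iff _ _ _).2 (hm.of_dvd hd)
    rw [Nat.cast_sub hp1.le, (ZMod.natCast_eq_zero_iff _ _).2 hd] at this
    push_cast at this
    rw [← this]
    simp
  have hne : (-1 : ZMod q) ≠ 1 := by
    have : Fact (2 < q) := ⟨lt_of_le_of_ne hf.two_le (Ne.symm hq2)⟩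
    exact ZMod.neg_one_ne_one
  have : Fact (Nat.Prime 2) := ⟨Nat.prime_two⟩
  have ho : orderOf ((7 : ZMod q) ^ A) = 2 ^ (e + 1) := by
    apply orderOf_eq_prime_pow
    · rw [hz]; exact hne
    · rw [pow_succ 2 e, pow_mul, hz]; norm_num
  have hx0 : ((7 : ZMod q) ^ A) ≠ 0 := by
    intro h
    rw [h, zero_pow (by positivity)] at hz
    exact one_ne_zero (neg_eq_zero.1 hz.symm)
  have hdv : 2 ^ (e + 1) ∣ q - 1 := by
    rw [← ho]
    exact orderOf_dvd_of_pow_eq_one (ZMod.pow_card_sub_one_eq_one hx0)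
  have hle : 2 ^ (e + 1) ≤ q - 1 := Nat.le_of_dvd (by have := hf.two_le; omega) hdv
  have hle' : 2 ^ (e + 1) ≤ q := hle.trans (Nat.sub_le _ _)
  by_contra hnp
  have := Nat.minFac_sq_le_self (by omega) hnp
  rw [← hq, pow_two] at this
  exact absurd (lt_of_lt_of_le h4 ((Nat.mul_le_mul hle' hle').trans this)) (lt_irrefl _)

theorem prime_P : Nat.Prime P :=
  proth P (P / 2 ^ 342) 341 700 (by decide +kernel) (by decide +kernel) (by decide +kernel)
    (by decide +kernel) (by decide +kernel)

theorem not_prime_up (i k : ℕ) (hk0 : 0 < k) (hk : k ≤ 8) : ¬ Nat.Prime (P + k * 9 ^ i) := by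
  intro hp
  have hc : ∀ j < 360, ∀ k < 9, k = 0 ∨ Nat.gcd (P + k * 9 ^ j) Q ≠ 1 := by decide +kernel
  have h9 : 9 ^ 360 ≡ 1 [MOD Q] := by unfold Nat.ModEq; decide +kernel
  have hQ : 0 < Q ∧ Q < P := by decide +kernel
  have hmod : P + k * 9 ^ i ≡ P + k * 9 ^ (i % 360) [MOD Q] := by
    refine Nat.ModEq.add_left _ (Nat.ModEq.mul_left _ ?_)
    conv_lhs => rw [← Nat.div_add_mod i 360, pow_add, pow_mul]
    simpa using (h9.pow (i / 360)).mul_right (9 ^ (i % 360))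
  have hg := hmod.gcd_eq
  rcases hc (i % 360) (Nat.mod_lt _ (by norm_num)) k (by omega) with h | h
  · omega
  · apply h
    rw [← hg]
    refine (Nat.Prime.coprime_iff_not_dvd hp).2 fun hdv => ?_
    have := Nat.le_of_dvd hQ.1 hdv
    omega

/-- Compositeness test: even, or fails the base-2 Fermat test. -/
def comp (n : ℕ) : Bool :=
  Nat.blt 2 n && (Nat.beq (n % 2) 0 ||
    (Nat.blt Q n && !(Nat.beq (Nat.gcd n Q) 1)) ||
    (Nat.blt n (2 ^ 700) && !(Nat.beq (pm 700 n 2 (n - 1) 1 % n) 1)))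

theorem comp_spec (n : ℕ) (h : comp n = true) : ¬ Nat.Prime n := by
  intro hp
  have hQ : 0 < Q := by decide +kernel
  simp only [comp, Bool.and_eq_true, Bool.or_eq_true, Bool.not_eq_true', Nat.blt_eq, Nat.beq_eq,
    ← Bool.not_eq_true] at h
  obtain ⟨h2, (h | ⟨h3, h4⟩) | ⟨h3, h4⟩⟩ := h
  · rcases hp.eq_two_or_odd with h' | h' <;> omega
  · apply h4
    refine (Nat.Prime.coprime_iff_not_dvd hp).2 fun hdv => ?_
    have := Nat.le_of_dvd hQ hdv
    omega
  · apply h4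
    have hm := pm_spec 700 n 2 (n - 1) 1 (by omega)
    have hco : Nat.Coprime 2 n :=
      ((Nat.coprime_primes Nat.prime_two hp).2 (by omega))
    have hf := Nat.ModEq.pow_totient hco
    rw [Nat.totient_prime hp] at hf
    rw [one_mul] at hm
    have := hm.trans hf
    unfold Nat.ModEq at this
    rw [this, Nat.mod_eq_of_lt (by omega)]

theorem down : ∀ i < 230, ∀ d < digit P i, comp (P - digit P i * 9 ^ i + d * 9 ^ i) = true := by
  decide +kernel

end WDD

/-- There exists a widely digitally delicate prime in base 9: a prime p such
that replacing any one of its base-9 digits, including any of its leading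
zeros, by a different digit in {0, ..., 8} yields a number that is not prime. -/
theorem exists_widely_digitally_delicate_base_9 :
    ∃ p : ℕ, Nat.Prime p ∧
      ∀ i : ℕ, ∀ d : ℕ, d ≤ 8 → d ≠ digit p i →
        ¬ Nat.Prime (p - digit p i * 9 ^ i + d * 9 ^ i) := by
  refine ⟨WDD.P, WDD.prime_P, fun i d hd hne => ?_⟩
  rcases Nat.lt_or_gt_of_ne hne with h | h
  · have hi : i < 230 := by
      by_contra hi
      have h1 : WDD.P < 9 ^ 230 := by decide +kernel
      have h2 : 9 ^ 230 ≤ 9 ^ i := Nat.pow_le_pow_right (by norm_num) (by omega)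
      have : digit WDD.P i = 0 := by
        unfold digit
        rw [Nat.div_eq_of_lt (h1.trans_le h2)]
      omega
    exact WDD.comp_spec _ (WDD.down i hi d h)
  · have hle : digit WDD.P i * 9 ^ i ≤ WDD.P := by
      refine (Nat.mul_le_mul_right _ (Nat.mod_le _ _)).trans (Nat.div_mul_le_self _ _)
    obtain ⟨k, rfl⟩ : ∃ k, d = digit WDD.P i + k := ⟨d - digit WDD.P i, by omega⟩
    have : WDD.P - digit WDD.P i * 9 ^ i + (digit WDD.P i + k) * 9 ^ i = WDD.P + k * 9 ^ i := by
      rw [add_mul, ← add_assoc, Nat.sub_add_cancel hle]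
    rw [this]
    exact WDD.not_prime_up i k (by omega) (by omega)
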